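/- arXiv:2605.19063 — 2 statements merged into one kernel-verified Lean document; each statement's English description precedes it below -/
import Mathlib

section
/- For all n ≥ 3 and all natural numbers u, v, the number of parallelogram polyominoes P ∈ PP(n−2,3) with area(P) = u and bounce(P) = v equals the number of P ∈ PP(n−2,3) with area(P) = v and bounce(P) = u. (The q,t-symmetry N_{n,3}(q,t) = N_{n,3}(t,q) of the q,t-Narayana polynomial defined by the pair (area, bounce) on polyominoes.) -/
namespace QtN

/-! ### Lattice paths and parallelogram polyominoes -/

/-- A step of a lattice path: east or north. -/
inductive Step : Type
  | E : Step
  | N : Step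
  deriving DecidableEq, Repr

/-- Number of east steps of a path. -/
def countE (w : List Step) : ℕ := w.count Step.E

/-- Number of north steps of a path. -/
def countN (w : List Step) : ℕ := w.count Step.N

/-- Endpoint of a path started at the origin. -/
def pathPos (w : List Step) : ℕ × ℕ := (countE w, countN w)

/-- The set of lattice points visited by a path started at the origin. -/
def pathPts (w : List Step) : Finset (ℕ × ℕ) :=
  ((List.range (w.length + 1)).map (fun i => pathPos (w.take i))).toFinset

/-- `colHeightsAux w h`: for each east step of `w` (in order), the number of north
steps preceding it, starting with `h` north steps already performed. -/
def colHeightsAux : List Step → ℕ → List ℕ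
  | [], _ => []
  | Step.E :: r, h => h :: colHeightsAux r h
  | Step.N :: r, h => colHeightsAux r (h + 1)

/-- Height at which the path `w` crosses the vertical strip `i ≤ x ≤ i + 1`. -/
def colHeight (w : List Step) (i : ℕ) : ℕ := (colHeightsAux w 0).getD i 0

/-- A parallelogram polyomino of size `m × n`: a pair of monotone lattice paths from
`(0,0)` to `(m,n)` (east/north steps), the upper path staying weakly above the lower
path, and the two paths meeting only at `(0,0)` and `(m,n)`. -/
structure Polyomino (m n : ℕ) : Type where
  lower : List Step
  upper : List Step
  lowerE : countE lower = m
  lowerN : countN lower = n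
  upperE : countE upper = m
  upperN : countN upper = n
  above : ∀ i < m, colHeight lower i ≤ colHeight upper i
  meet : pathPts upper ∩ pathPts lower = {(0, 0), (m, n)}

/-- The area statistic: number of unit squares between the two paths,
minus `(m + n - 1)`. -/
def area {m n : ℕ} (P : Polyomino m n) : ℕ :=
  (∑ i ∈ Finset.range m, (colHeight P.upper i - colHeight P.lower i)) - (m + n - 1)

/-- Where an eastward run at height `y`, starting at `x`, first hits the lower path. -/
def eastTarget (hL : ℕ → ℕ) (m x y : ℕ) : ℕ :=
  ((List.range m).filter (fun i => decide (x ≤ i ∧ y ≤ hL i))).headD m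

/-- Total bounce contribution: from state `(x, y)` just after the `j`-th east-to-north
turn (counting the turns made so far), alternately go north until hitting the upper
path and east until hitting the lower path, each step contributing the number of
east-to-north turns preceding it. -/
def bounceAux (hU hL : ℕ → ℕ) (m n : ℕ) : ℕ → ℕ → ℕ → ℕ → ℕ
  | 0, _, _, _ => 0
  | fuel + 1, x, y, j =>
    if x = m ∧ y = n then 0
    else
      let y' := hU (x - 1)
      let x' := if y' = n then m else eastTarget hL m x y'
      (j + 1) * ((y' - y) + (x' - x)) + bounceAux hU hL m n fuel x' y' (j + 1)

/-- The bounce statistic of a parallelogram polyomino: the bounce path starts with a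
single east step (contributing `0`) and then alternates north runs (to the ceiling)
and east runs (to the floor); each step contributes the number of east-to-north turns
preceding it; finally `(m + n - 1)` is subtracted. -/
def bounce {m n : ℕ} (P : Polyomino m n) : ℕ :=
  bounceAux (colHeight P.upper) (colHeight P.lower) m n (m + n + 2) 1 0 0 - (m + n - 1)

/-! ### Set partitions and noncrossing partitions -/

/-- Maximum of a finite set of naturals (`0` for the empty set). -/
def fmax (β : Finset ℕ) : ℕ := β.sup id

/-- Minimum of a finite set of naturals (`0` for the empty set). -/
def fmin (β : Finset ℕ) : ℕ := if h : β.Nonempty then β.min' h else 0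

/-- A set partition of `{1, …, n}`, given by its finite set of blocks. -/
structure SetPartition (n : ℕ) : Type where
  blocks : Finset (Finset ℕ)
  not_empty_mem : ∅ ∉ blocks
  cover : ∀ i : ℕ, i ∈ Finset.Icc 1 n ↔ ∃ β ∈ blocks, i ∈ β
  disjoint : ∀ β ∈ blocks, ∀ γ ∈ blocks, β ≠ γ → Disjoint β γ

/-- A family of blocks is noncrossing if there are no `a < b < c < d` with
`a, c` in one block and `b, d` in a different block. -/
def IsNoncrossing (bs : Finset (Finset ℕ)) : Prop :=
  ∀ a b c d : ℕ, a < b → b < c → c < d →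
    ∀ β ∈ bs, ∀ γ ∈ bs, a ∈ β → c ∈ β → b ∈ γ → d ∈ γ → β = γ

/-- `NC n k`: noncrossing partitions of `{1, …, n}` with exactly `n - k + 1` blocks. -/
abbrev NC (n k : ℕ) : Type :=
  {P : SetPartition n // IsNoncrossing P.blocks ∧ P.blocks.card = n - k + 1}

/-- The skip statistic: `∑_{β} (max β - min β - |β| + 1)`. -/
def skip (bs : Finset (Finset ℕ)) : ℕ :=
  ∑ β ∈ bs, ((fmax β + 1 - fmin β) - β.card)

/-- The non-singleton blocks of a partition. -/
def nsBlocks (bs : Finset (Finset ℕ)) : Finset (Finset ℕ) :=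
  bs.filter (fun β => 2 ≤ β.card)

/-- The block of `bs` containing `x` (junk if there is not exactly one). -/
def blockContaining (bs : Finset (Finset ℕ)) (x : ℕ) : Finset ℕ :=
  (bs.filter (fun β => x ∈ β)).sup id

/-- For a noncrossing partition in `NC n 3`, the quadruple `(a, b, c, d)` describing its
non-singleton blocks: for two pair blocks `{a,b}` and `{c,d}` (with `a` the global
minimum) this is `(a, b, c, d)`; for a single triple block `{a, b, c}` (`a < b < c`)
this is `(a, b, b, c)`. -/
def blockQuad (bs : Finset (Finset ℕ)) : ℕ × ℕ × ℕ × ℕ :=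
  let A := blockContaining (nsBlocks bs) (fmin ((nsBlocks bs).sup id))
  if (nsBlocks bs).card = 1 then
    let l := A.sort (· ≤ ·)
    (l.getD 0 0, l.getD 1 0, l.getD 1 0, l.getD 2 0)
  else
    let B := ((nsBlocks bs).erase A).sup id
    (fmin A, fmax A, fmin B, fmax B)

/-- The leap statistic on `NC n 3`: `leap(ab|cd) = c - 2 + max(0, c - b)`,
and `leap({a,b,c}) = b - 2` (the case `b = c`). -/
def leap (bs : Finset (Finset ℕ)) : ℕ :=
  let (_, b, c, _) := blockQuad bs
  (c - 2) + (c - b)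

/-- The skew statistic on `NC n 3`: `skew(ab|cd) = c - 2 + a` if `b < c`, else `c - 2`;
`skew({a,b,c}) = b - 2` (the case `b = c`). -/
def skew (bs : Finset (Finset ℕ)) : ℕ :=
  let (a, b, c, _) := blockQuad bs
  if b < c then c - 2 + a else c - 2

/-- The mag statistic on `NC n 3`: `mag(ab|cd) = a + max(b, c) - 2 - ⌈(b - a)/2⌉`,
and `mag({a,b,c}) = a + b - 2 - ⌈(b - a)/2⌉` (the case `b = c`). -/
def mag (bs : Finset (Finset ℕ)) : ℕ :=
  let (a, b, c, _) := blockQuad bs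
  a + max b c - 2 - (b - a + 1) / 2

/-- The area statistic on noncrossing partitions:
`area(π) = ∑_{β, β' ∈ π} #{ i ∈ β' : i < max β < max β' }` (ordered pairs of blocks). -/
def ncArea (bs : Finset (Finset ℕ)) : ℕ :=
  ∑ β ∈ bs, ∑ γ ∈ bs, (γ.filter (fun i => i < fmax β ∧ fmax β < fmax γ)).card

/-- The elements of the non-singleton blocks, listed in increasing order, with
the middle element of a size-3 block listed twice. -/
def nsList (bs : Finset (Finset ℕ)) : List ℕ :=
  let l := ((nsBlocks bs).sup id).sort (· ≤ ·)
  if l.length = 3 then [l.getD 0 0, l.getD 1 0, l.getD 1 0, l.getD 2 0] else l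

/-- The multiset of block sizes of a partition. -/
def blockSizes (bs : Finset (Finset ℕ)) : Multiset ℕ := bs.val.map Finset.card

/-- The image of a partition of `{1, …, n}` under the flip `i ↦ n + 1 - i`. -/
def flipBlocks (n : ℕ) (bs : Finset (Finset ℕ)) : Finset (Finset ℕ) :=
  bs.image (fun β => β.image (fun i => n + 1 - i))

/-! ### The mingarc statistic -/

/-- The gaps `ν_r = m_{r+1} - m_r - 1` between consecutive block minima
`m_1 < ⋯ < m_h` (with `m_{h+1} = n + 1`). -/
def nuList (n : ℕ) (bs : Finset (Finset ℕ)) : List ℕ :=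
  let ms := ((bs.image fmin).sort (· ≤ ·)) ++ [n + 1]
  (List.range (bs.image fmin).card).map (fun r => ms.getD (r + 1) 0 - ms.getD r 0 - 1)

/-- Concatenation of `replicate ν c` over a list of pairs `(c, ν)`. -/
def repeatEach : List (ℕ × ℕ) → List ℕ
  | [] => []
  | p :: r => List.replicate p.2 p.1 ++ repeatEach r

/-- The right endpoints `y_1 ≤ ⋯ ≤ y_{k-1}`: each block maximum `c_r` repeated
`ν_r` times, in increasing order. -/
def ysList (n : ℕ) (bs : Finset (Finset ℕ)) : List ℕ :=
  repeatEach (List.zip ((bs.image fmax).sort (· ≤ ·)) (nuList n bs))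

/-- The left endpoints `x_1 < ⋯ < x_{k-1}`: the elements of `{1, …, n}` that are not
block maxima, in increasing order. -/
def xsList (n : ℕ) (bs : Finset (Finset ℕ)) : List ℕ :=
  ((Finset.Icc 1 n).filter (fun i => i ∉ bs.image fmax)).sort (· ≤ ·)

/-- Greedy left-to-right selection of arcs: keep the first arc, and thereafter keep the
earliest arc whose left endpoint exceeds the right endpoint of the last kept arc. -/
def greedyArcs : List (ℕ × ℕ) → Option ℕ → List (ℕ × ℕ)
  | [], _ => []
  | a :: rest, none => a :: greedyArcs rest (some a.2)
  | a :: rest, some r =>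
      if r < a.1 then a :: greedyArcs rest (some a.2) else greedyArcs rest (some r)

/-- The mingarc statistic: the sum of `n - y_i` over the greedily selected
candidate arcs `[x_i, y_i]`. -/
def mingarc (n : ℕ) (bs : Finset (Finset ℕ)) : ℕ :=
  ((greedyArcs (List.zip (xsList n bs) (ysList n bs)) none).map (fun p => n - p.2)).sum

/-! ### The map η from polyominoes to noncrossing partitions -/

/-- Largest column index `i < m` with `colHeight lower i ≤ j`: the rightmost cell
adjacent to the floor in row `j`. -/
def eFloor {m k : ℕ} (P : Polyomino m k) (j : ℕ) : ℕ :=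
  (((List.range m).filter (fun i => decide (colHeight P.lower i ≤ j))).getLastD 0)

/-- Smallest column index `i` with `colHeight upper i ≥ j + 1`: the leftmost cell
adjacent to the ceiling in row `j` (with default `m - 1`). -/
def fCeil {m k : ℕ} (P : Polyomino m k) (j : ℕ) : ℕ :=
  (((List.range m).filter (fun i => decide (j + 1 ≤ colHeight P.upper i))).headD (m - 1))

/-- The number of cells adjacent to the ceiling in row `j`. -/
def rowCount {m k : ℕ} (P : Polyomino m k) (j : ℕ) : ℕ :=
  fCeil P (j + 1) - fCeil P j + 1

/-- Pick, `cnt` times, the largest label in `{1, …, L}` not used yet. -/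
def pickRow : ℕ → ℕ → Finset ℕ → Finset ℕ
  | 0, _, _ => ∅
  | cnt + 1, L, used =>
      let x := fmax ((Finset.Icc 1 L) \ used)
      insert x (pickRow cnt L (insert x used))

/-- The blocks of `η(P)`: label the cells adjacent to the floor `1, …, n` going bottom
to top, left to right (the label of the floor cell in column `i`, row `j` is
`i + j + 1`, and the labels present in rows `≤ j` are exactly `1, …, eFloor P j + j + 1`);
then going bottom to top, left to right over the cells adjacent to the ceiling, assign
to each the largest unused indexing label occurring in the same row or below; the
blocks are the label sets of the ceiling rows. -/
def etaBlocks {m k : ℕ} (P : Polyomino m k) : Finset (Finset ℕ) :=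
  (((List.range k).foldl
      (fun st j =>
        let B := pickRow (rowCount P j) (eFloor P j + j + 1) st.1
        (st.1 ∪ B, B :: st.2))
      ((∅ : Finset ℕ), ([] : List (Finset ℕ)))).2).toFinset

/-!
For polyominoes of size `(M + 1) × 3`, the generating function `∑ q ^ area t ^ bounce` is the
coefficient of `z ^ M` in
`(1 - q² t² z²) / ((1 - z) (1 - q z) (1 - t z) (1 - q² z) (1 - q t z) (1 - t² z))`,
which is visibly symmetric in `q` and `t`. Bijectively, polyominoes correspond to the monomials of
degree `M` in variables of weights `1, q, t, q², qt, t²` that are not divisible by the product of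
the variables of weights `q²` and `t²`, with (area, bounce) becoming the bidegree; exchanging the
two variables of weights `q, t` and the two of weights `q², t²` then exchanges area and bounce.
-/

/-! ### North steps of a path -/

/-- The abscissae of the north steps of a path, in order: the row analogue of the column
heights `colHeightsAux`. -/
def northSteps : List Step → List ℕ
  | [] => []
  | Step.E :: w => (northSteps w).map (· + 1)
  | Step.N :: w => 0 :: northSteps w

@[simp]
theorem countE_cons_E (w : List Step) : countE (Step.E :: w) = countE w + 1 := by
  simp [countE]

@[simp]
theorem countE_cons_N (w : List Step) : countE (Step.N :: w) = countE w := by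
  simp [countE]

@[simp]
theorem countN_cons_E (w : List Step) : countN (Step.E :: w) = countN w := by
  simp [countN]

@[simp]
theorem countN_cons_N (w : List Step) : countN (Step.N :: w) = countN w + 1 := by
  simp [countN]

@[simp]
theorem length_northSteps (w : List Step) : (northSteps w).length = countN w := by
  induction w with
  | nil => rfl
  | cons s w ih => cases s <;> simp [northSteps, ih]

theorem le_countE_of_mem_northSteps {w : List Step} {a : ℕ} (ha : a ∈ northSteps w) :
    a ≤ countE w := by
  induction w generalizing a with
  | nil => simp [northSteps] at ha
  | cons s w ih =>
    cases s with
    | E =>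
      obtain ⟨b, hb, rfl⟩ := List.mem_map.1 ha
      simpa using ih hb
    | N =>
      rcases List.mem_cons.1 ha with rfl | hb
      · exact Nat.zero_le _
      · simpa using ih hb

theorem pairwise_northSteps (w : List Step) : (northSteps w).Pairwise (· ≤ ·) := by
  induction w with
  | nil => exact List.Pairwise.nil
  | cons s w ih => cases s <;> simpa [northSteps, List.pairwise_map] using ih

theorem eq_of_northSteps_eq {w w' : List Step} (hE : countE w = countE w')
    (hN : northSteps w = northSteps w') : w = w' := by
  induction w generalizing w' with
  | nil =>
    match w' with
    | [] => rfl
    | Step.E :: w' => simp [countE] at hE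
    | Step.N :: w' => simp [northSteps] at hN
  | cons s w ih =>
    match s, w' with
    | Step.E, [] => simp [countE] at hE
    | Step.N, [] => simp [northSteps] at hN
    | Step.E, Step.E :: w' =>
      rw [ih (by simpa using hE) (List.map_injective_iff.2 (add_left_injective 1) hN)]
    | Step.N, Step.N :: w' => rw [ih (by simpa using hE) (List.cons.inj hN).2]
    | Step.E, Step.N :: w' => cases h : northSteps w <;> simp [northSteps, h] at hN
    | Step.N, Step.E :: w' => cases h : northSteps w' <;> simp [northSteps, h] at hN

theorem countE_replicate_E_append (k : ℕ) (w : List Step) :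
    countE (List.replicate k Step.E ++ w) = k + countE w := by
  simp [countE]

theorem northSteps_replicate_E_append (k : ℕ) (w : List Step) :
    northSteps (List.replicate k Step.E ++ w) = (northSteps w).map (· + k) := by
  induction k with
  | zero => simp
  | succ k ih => simp [List.replicate_succ, northSteps, ih]

theorem exists_countE_eq_northSteps_eq {m : ℕ} {l : List ℕ} (hl : l.Pairwise (· ≤ ·))
    (hm : ∀ a ∈ l, a ≤ m) : ∃ w, countE w = m ∧ northSteps w = l := by
  suffices key : ∀ x ≤ m, (∀ a ∈ l, x ≤ a) →
      ∃ w, x + countE w = m ∧ (northSteps w).map (· + x) = l by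
    simpa using key 0 (Nat.zero_le m) fun a _ => Nat.zero_le a
  induction l with
  | nil =>
    intro x hx _
    refine ⟨List.replicate (m - x) Step.E ++ [], ?_, ?_⟩
    · rw [countE_replicate_E_append]
      exact Nat.add_sub_cancel' hx
    · rw [northSteps_replicate_E_append]
      rfl
  | cons a l ih =>
    intro x _ hx
    obtain ⟨hal, hl⟩ := List.pairwise_cons.1 hl
    have hxa : x ≤ a := hx a List.mem_cons_self
    obtain ⟨w, hwE, hwN⟩ :=
      ih hl (fun b hb => hm b (List.mem_cons_of_mem a hb)) a (hm a List.mem_cons_self) hal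
    refine ⟨List.replicate (a - x) Step.E ++ Step.N :: w, ?_, ?_⟩
    · rw [countE_replicate_E_append, countE_cons_N]
      omega
    · rw [northSteps_replicate_E_append]
      simpa [northSteps, Function.comp_def, add_assoc, Nat.sub_add_cancel hxa] using hwN

theorem mem_pathPts_cons {s : Step} {w : List Step} {p : ℕ × ℕ} :
    p ∈ pathPts (s :: w) ↔ p = 0 ∨ ∃ p' ∈ pathPts w, pathPos [s] + p' = p := by
  have pathPos_cons (i : ℕ) : pathPos (s :: w.take i) = pathPos [s] + pathPos (w.take i) := by
    cases s <;> simp [pathPos, countE, countN, add_comm]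
  have pathPos_nil : pathPos [] = 0 := rfl
  simp [pathPts, List.range_succ_eq_map (n := w.length + 1), pathPos_cons, pathPos_nil, eq_comm,
    -Prod.exists]

theorem mem_pathPts_iff {w : List Step} {x y : ℕ} :
    (x, y) ∈ pathPts w ↔ x ≤ countE w ∧
      (northSteps w).countP (· < x) ≤ y ∧ y ≤ (northSteps w).countP (· ≤ x) := by
  induction w generalizing x y with
  | nil => simp [pathPts, pathPos, countE, countN, northSteps]
  | cons s w ih =>
    rw [mem_pathPts_cons]
    cases s <;> rcases x with _ | x <;> rcases y with _ | y <;>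
      simp [northSteps, Prod.ext_iff, pathPos, countE, countN, Function.comp_def, ih,
        add_comm 1]

theorem colHeight_eq_countP {w : List Step} {i : ℕ} (hi : i < countE w) :
    colHeight w i = (northSteps w).countP (· ≤ i) := by
  suffices key : ∀ h, (colHeightsAux w h).getD i 0 = h + (northSteps w).countP (· ≤ i) by
    simpa [colHeight] using key 0
  induction w generalizing i with
  | nil => simp [countE] at hi
  | cons s w ih =>
    intro h
    cases s with
    | N =>
      simpa [colHeightsAux, northSteps, add_assoc, add_comm 1] using
        ih (by simpa using hi) (h + 1)
    | E =>
      cases i with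
      | zero => simp [colHeightsAux, northSteps, Function.comp_def]
      | succ i =>
        simpa [colHeightsAux, northSteps, Function.comp_def] using ih (by simpa using hi) h

theorem sum_colHeight_add_sum_northSteps (w : List Step) :
    (∑ i ∈ Finset.range (countE w), colHeight w i) + (northSteps w).sum =
      countE w * countN w := by
  suffices key : ∀ h, (∑ i ∈ Finset.range (countE w), (colHeightsAux w h).getD i 0) +
      (northSteps w).sum = countE w * (countN w + h) from key 0
  induction w with
  | nil => simp [countE, northSteps]
  | cons s w ih =>
    intro h
    cases s with
    | N => simpa [colHeightsAux, northSteps, add_assoc, add_comm 1] using ih (h + 1)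
    | E =>
      simp only [colHeightsAux, northSteps, countE_cons_E, countN_cons_E, Finset.sum_range_succ',
        List.getD_cons_succ, List.getD_cons_zero, List.sum_map_add, List.map_id', List.map_const',
        length_northSteps, List.sum_replicate, smul_eq_mul, mul_one]
      linarith [ih h]

theorem sum_colHeight_sub_add_sum_northSteps {m n : ℕ} (P : Polyomino m n) :
    (∑ i ∈ Finset.range m, (colHeight P.upper i - colHeight P.lower i)) +
      (northSteps P.upper).sum = (northSteps P.lower).sum := by
  have hU := sum_colHeight_add_sum_northSteps P.upper
  have hL := sum_colHeight_add_sum_northSteps P.lower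
  rw [P.upperE, P.upperN] at hU
  rw [P.lowerE, P.lowerN] at hL
  have hle i (hi : i ∈ Finset.range m) := P.above i (Finset.mem_range.1 hi)
  have hsub := Finset.sum_tsub_distrib (Finset.range m) hle
  have hsum := Finset.sum_le_sum hle
  omega

/-! ### Polyominoes with three rows -/

section ThreeRows

variable {M : ℕ}

/-- The data left free in a polyomino of size `(M + 1) × 3`: the north steps of its upper path
have abscissae `0, a, b`, those of its lower path `c + 1, d + 1, M + 1`. -/
@[ext]
structure Corners (M : ℕ) where
  a : ℕ
  b : ℕ
  c : ℕ
  d : ℕ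
  a_le_b : a ≤ b
  a_le_c : a ≤ c
  b_le_d : b ≤ d
  c_le_d : c ≤ d
  d_le : d ≤ M

theorem mem_pathPts_iff_of_northSteps_eq {w : List Step} {a b c x y : ℕ}
    (hw : northSteps w = [a, b, c]) :
    (x, y) ∈ pathPts w ↔ (y = 0 ∧ x ≤ a) ∨ (y = 1 ∧ a ≤ x ∧ x ≤ b) ∨
      (y = 2 ∧ b ≤ x ∧ x ≤ c) ∨ (y = 3 ∧ c ≤ x ∧ x ≤ countE w) := by
  have hsorted := pairwise_northSteps w
  have hc : c ≤ countE w := le_countE_of_mem_northSteps (by simp [hw])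
  simp only [hw, List.pairwise_cons, List.mem_cons, List.not_mem_nil, or_false, forall_eq_or_imp,
    forall_eq] at hsorted
  simp only [mem_pathPts_iff, hw, List.countP_cons, List.countP_nil, decide_eq_true_eq]
  split_ifs <;> omega

theorem Polyomino.exists_corners (P : Polyomino (M + 1) 3) :
    ∃ x : Corners M, northSteps P.upper = [0, x.a, x.b] ∧
      northSteps P.lower = [x.c + 1, x.d + 1, M + 1] := by
  obtain ⟨u₀, u₁, u₂, hU⟩ := List.length_eq_three.1 ((length_northSteps P.upper).trans P.upperN)
  obtain ⟨l₀, l₁, l₂, hL⟩ := List.length_eq_three.1 ((length_northSteps P.lower).trans P.lowerN)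
  have hUsorted := pairwise_northSteps P.upper
  have hLsorted := pairwise_northSteps P.lower
  simp only [hU, hL, List.pairwise_cons, List.mem_cons, List.not_mem_nil, or_false,
    forall_eq_or_imp, forall_eq] at hUsorted hLsorted
  have hl₂ : l₂ ≤ M + 1 := P.lowerE ▸ le_countE_of_mem_northSteps (by simp [hL])
  have meet (x y : ℕ) := Finset.ext_iff.1 P.meet (x, y)
  simp only [Finset.mem_inter, mem_pathPts_iff_of_northSteps_eq hU,
    mem_pathPts_iff_of_northSteps_eq hL, Finset.mem_insert, Finset.mem_singleton,
    Prod.mk.injEq, P.upperE, P.lowerE] at meet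
  have upper_starts_north : u₀ = 0 := by
    have above := P.above 0 M.succ_pos
    rw [colHeight_eq_countP (by simp [P.lowerE]), colHeight_eq_countP (by simp [P.upperE]),
      hU, hL] at above
    simp only [List.countP_cons, List.countP_nil, decide_eq_true_eq] at above
    have := meet 1 0
    split_ifs at above <;> omega
  have lower_starts_east : 0 < l₀ := by have := meet 0 1; omega
  have row_one_separated : u₁ < l₀ := by have := meet l₀ 1; omega
  have row_two_separated : u₂ < l₁ := by have := meet l₁ 2; omega
  have lower_ends_north : l₂ = M + 1 := by have := meet l₂ 3; omega
  refine ⟨⟨u₁, u₂, l₀ - 1, l₁ - 1, by omega, by omega, by omega, by omega, by omega⟩, ?_, ?_⟩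
  · simp only [hU, upper_starts_north]
  · simp only [hL, List.cons.injEq, and_true]
    omega

/-- The corners of a polyomino with three rows. -/
noncomputable def Polyomino.corners (P : Polyomino (M + 1) 3) : Corners M :=
  P.exists_corners.choose

theorem Polyomino.northSteps_upper (P : Polyomino (M + 1) 3) :
    northSteps P.upper = [0, P.corners.a, P.corners.b] :=
  P.exists_corners.choose_spec.1

theorem Polyomino.northSteps_lower (P : Polyomino (M + 1) 3) :
    northSteps P.lower = [P.corners.c + 1, P.corners.d + 1, M + 1] :=
  P.exists_corners.choose_spec.2

theorem Polyomino.colHeight_upper (P : Polyomino (M + 1) 3) {i : ℕ} (hi : i ≤ M) :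
    colHeight P.upper i = if i < P.corners.a then 1 else if i < P.corners.b then 2 else 3 := by
  have := P.corners.a_le_b
  rw [colHeight_eq_countP (by rw [P.upperE]; omega), P.northSteps_upper]
  simp only [List.countP_cons, List.countP_nil, decide_eq_true_eq]
  split_ifs <;> omega

theorem Polyomino.colHeight_lower (P : Polyomino (M + 1) 3) {i : ℕ} (hi : i ≤ M) :
    colHeight P.lower i = if i ≤ P.corners.c then 0 else if i ≤ P.corners.d then 1 else 2 := by
  have := P.corners.c_le_d
  rw [colHeight_eq_countP (by rw [P.lowerE]; omega), P.northSteps_lower]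
  simp only [List.countP_cons, List.countP_nil, decide_eq_true_eq]
  split_ifs <;> omega

theorem Polyomino.corners_injective :
    Function.Injective (Polyomino.corners : Polyomino (M + 1) 3 → Corners M) := by
  intro P Q h
  have hU : P.upper = Q.upper := eq_of_northSteps_eq (P.upperE.trans Q.upperE.symm)
    (by rw [P.northSteps_upper, Q.northSteps_upper, h])
  have hL : P.lower = Q.lower := eq_of_northSteps_eq (P.lowerE.trans Q.lowerE.symm)
    (by rw [P.northSteps_lower, Q.northSteps_lower, h])
  cases P
  cases Q
  simp_all only

theorem Corners.exists_polyomino (x : Corners M) :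
    ∃ P : Polyomino (M + 1) 3, northSteps P.upper = [0, x.a, x.b] ∧
      northSteps P.lower = [x.c + 1, x.d + 1, M + 1] := by
  obtain ⟨a, b, c, d, hab, hac, hbd, hcd, hdM⟩ := x
  obtain ⟨up, upE, hU⟩ := exists_countE_eq_northSteps_eq (m := M + 1) (l := [0, a, b])
    (by simp; omega) (by simp; omega)
  obtain ⟨lo, loE, hL⟩ := exists_countE_eq_northSteps_eq (m := M + 1) (l := [c + 1, d + 1, M + 1])
    (by simp; omega) (by simp; omega)
  refine ⟨⟨lo, up, loE, ?_, upE, ?_, ?_, ?_⟩, hU, hL⟩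
  · simp [← length_northSteps, hL]
  · simp [← length_northSteps, hU]
  · intro i hi
    rw [colHeight_eq_countP (loE ▸ hi), colHeight_eq_countP (upE ▸ hi), hL, hU]
    simp only [List.countP_cons, List.countP_nil, decide_eq_true_eq]
    split_ifs <;> omega
  · ext ⟨x, y⟩
    simp only [Finset.mem_inter, mem_pathPts_iff_of_northSteps_eq hU,
      mem_pathPts_iff_of_northSteps_eq hL, Finset.mem_insert, Finset.mem_singleton,
      Prod.mk.injEq, upE, loE]
    omega

theorem Polyomino.corners_surjective :
    Function.Surjective (Polyomino.corners : Polyomino (M + 1) 3 → Corners M) := by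
  intro x
  obtain ⟨P, hU, hL⟩ := x.exists_polyomino
  have hU' := P.northSteps_upper.symm.trans hU
  have hL' := P.northSteps_lower.symm.trans hL
  simp only [List.cons.injEq, Nat.add_right_cancel_iff, and_true, true_and] at hU' hL'
  exact ⟨P, Corners.ext hU'.1 hU'.2 hL'.1 hL'.2⟩

theorem Polyomino.area_eq (P : Polyomino (M + 1) 3) :
    area P = P.corners.c + P.corners.d - (P.corners.a + P.corners.b) := by
  have h := sum_colHeight_sub_add_sum_northSteps P
  simp only [P.northSteps_upper, P.northSteps_lower, List.sum_cons, List.sum_nil] at h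
  rw [area]
  omega

/-! ### The bounce path of a polyomino with three rows -/

theorem eastTarget_eq {hL : ℕ → ℕ} {m x y s : ℕ} (hs : s ≤ m)
    (before : ∀ i < s, i < x ∨ hL i < y) (hit : s < m → x ≤ s ∧ y ≤ hL s) :
    eastTarget hL m x y = s := by
  rw [eastTarget, List.headD_eq_head?_getD, List.head?_filter]
  rcases hs.lt_or_eq with hsm | rfl
  · rw [List.find?_range_eq_some.2 (by simpa using ⟨hit hsm, hsm, before⟩), Option.getD_some]
  · rw [List.find?_range_eq_none.2 (by simpa using before), Option.getD_none]

theorem bounceAux_target (hU hL : ℕ → ℕ) (m n fuel j : ℕ) :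
    bounceAux hU hL m n fuel m n j = 0 := by
  cases fuel <;> simp [bounceAux]

theorem bounceAux_of_eq_top {hU : ℕ → ℕ} {n x y : ℕ} (hL : ℕ → ℕ) (m fuel j : ℕ) (hy : y < n)
    (htop : hU (x - 1) = n) :
    bounceAux hU hL m n (fuel + 1) x y j = (j + 1) * ((n - y) + (m - x)) := by
  rw [bounceAux, if_neg (by omega)]
  simp only [htop, if_true, bounceAux_target, add_zero]

theorem bounceAux_of_lt_top {hU : ℕ → ℕ} {n x y : ℕ} (hL : ℕ → ℕ) (m fuel j : ℕ) (hy : y < n)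
    (htop : hU (x - 1) < n) :
    bounceAux hU hL m n (fuel + 1) x y j =
      (j + 1) * ((hU (x - 1) - y) + (eastTarget hL m x (hU (x - 1)) - x)) +
        bounceAux hU hL m n fuel (eastTarget hL m x (hU (x - 1))) (hU (x - 1)) (j + 1) := by
  rw [bounceAux, if_neg (by omega)]
  simp only [htop.ne, if_false]

theorem Polyomino.eastTarget_one (P : Polyomino (M + 1) 3) {x : ℕ} (hx : x ≤ P.corners.c + 1) :
    eastTarget (colHeight P.lower) (M + 1) x 1 = P.corners.c + 1 := by
  have hcd := P.corners.c_le_d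
  have hdM := P.corners.d_le
  apply eastTarget_eq (by omega)
  · intro i hi
    right
    rw [P.colHeight_lower (by omega)]
    split_ifs <;> omega
  · intro hc
    rw [P.colHeight_lower (by omega)]
    split_ifs <;> omega

theorem Polyomino.eastTarget_two (P : Polyomino (M + 1) 3) {x : ℕ} (hx : x ≤ P.corners.d + 1) :
    eastTarget (colHeight P.lower) (M + 1) x 2 = P.corners.d + 1 := by
  have hcd := P.corners.c_le_d
  have hdM := P.corners.d_le
  apply eastTarget_eq (by omega)
  · intro i hi
    right
    rw [P.colHeight_lower (by omega)]
    split_ifs <;> omega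
  · intro hd
    rw [P.colHeight_lower (by omega)]
    split_ifs <;> omega

theorem Polyomino.bounceAux_of_colHeight_eq_two (P : Polyomino (M + 1) 3) {x y : ℕ} (fuel j : ℕ)
    (hy : y < 3) (hx : x ≤ P.corners.d + 1) (hU : colHeight P.upper (x - 1) = 2) :
    bounceAux (colHeight P.upper) (colHeight P.lower) (M + 1) 3 (fuel + 2) x y j =
      (j + 1) * ((2 - y) + (P.corners.d + 1 - x)) + (j + 2) * (1 + (M - P.corners.d)) := by
  have hab := P.corners.a_le_b
  have hbd := P.corners.b_le_d
  have hdM := P.corners.d_le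
  have htop : colHeight P.upper (P.corners.d + 1 - 1) = 3 := by
    rw [P.colHeight_upper (by omega)]
    split_ifs <;> omega
  rw [bounceAux_of_lt_top _ _ _ _ hy (by omega), hU, P.eastTarget_two hx,
    bounceAux_of_eq_top _ _ _ _ (by omega) htop]
  congr 2
  omega

/-- The bounce statistic of a polyomino with three rows, in terms of its corners. -/
def Corners.bounce (x : Corners M) : ℕ :=
  if x.b = 0 then 0
  else if x.a = 0 then M + 1 - x.d
  else if x.b ≤ x.c then M + 2 - x.c
  else (M + 1 - x.d) + (M + 2 - x.c)

theorem Polyomino.bounce_eq (P : Polyomino (M + 1) 3) : bounce P = P.corners.bounce := by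
  have hab := P.corners.a_le_b
  have hac := P.corners.a_le_c
  have hbd := P.corners.b_le_d
  have hcd := P.corners.c_le_d
  have hdM := P.corners.d_le
  have hU₀ := P.colHeight_upper (i := 1 - 1) (by omega)
  have hUc := P.colHeight_upper (i := P.corners.c + 1 - 1) (by omega)
  rw [bounce, Corners.bounce]
  split_ifs with hb ha hbc
  · rw [bounceAux_of_eq_top _ _ _ _ (by omega) (hU₀.trans (by split_ifs <;> omega))]
    omega
  · rw [P.bounceAux_of_colHeight_eq_two _ _ (by omega) (by omega)
      (hU₀.trans (by split_ifs <;> omega))]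
    omega
  · have hU₁ : colHeight P.upper (1 - 1) = 1 := hU₀.trans (by split_ifs <;> omega)
    rw [bounceAux_of_lt_top _ _ _ _ (by omega) (by omega), hU₁, P.eastTarget_one (by omega),
      bounceAux_of_eq_top _ _ _ _ (by omega) (hUc.trans (by split_ifs <;> omega))]
    omega
  · have hU₁ : colHeight P.upper (1 - 1) = 1 := hU₀.trans (by split_ifs <;> omega)
    rw [bounceAux_of_lt_top _ _ _ _ (by omega) (by omega), hU₁, P.eastTarget_one (by omega),
      P.bounceAux_of_colHeight_eq_two _ _ (by omega) (by omega)
        (hUc.trans (by split_ifs <;> omega))]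
    omega

end ThreeRows

/-! ### Standard monomials -/

section StandardMonomials

variable {M : ℕ}

/-- A monomial of degree `M` in six variables of weights `1, q, t, q², qt, t²`, not divisible by
the product of the variables of weights `q²` and `t²`. The fields are the exponents of the last five
variables; the exponent of the variable of weight `1` is implied by the degree. -/
@[ext]
structure StandardMonomial (M : ℕ) where
  q : ℕ
  t : ℕ
  qq : ℕ
  qt : ℕ
  tt : ℕ
  degree_le : q + t + qq + qt + tt ≤ M
  standard : qq = 0 ∨ tt = 0

namespace StandardMonomial

/-- The exponent of `q` in the weight of a standard monomial. -/
def degQ (y : StandardMonomial M) : ℕ := y.q + y.qt + 2 * y.qq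

/-- The exponent of `t` in the weight of a standard monomial. -/
def degT (y : StandardMonomial M) : ℕ := y.t + y.qt + 2 * y.tt

/-- The involution of the standard monomials exchanging `q` and `t`. -/
def swap (y : StandardMonomial M) : StandardMonomial M where
  q := y.t
  t := y.q
  qq := y.tt
  qt := y.qt
  tt := y.qq
  degree_le := by have := y.degree_le; omega
  standard := y.standard.symm

theorem swap_involutive : Function.Involutive (swap : StandardMonomial M → StandardMonomial M) :=
  fun _ => rfl

theorem degQ_swap (y : StandardMonomial M) : y.swap.degQ = y.degT := rfl

theorem degT_swap (y : StandardMonomial M) : y.swap.degT = y.degQ := rfl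

end StandardMonomial

/-- A bijection taking (area, bounce) to the bidegree. At a fixed bounce it amounts to
`[d] [d + 1] = (1 + q) h_{d-1}(1, q, q²)` for `a = 0 < b` and to
`h_{c-1}(1, q, q²) = q² h_{c-2}(1, q, q²) + h_{c-1}(1, q)` for `0 < a ≤ b ≤ c`, where
`[k] = 1 + q + ⋯ + q^(k-1)` and `h_k` is a complete homogeneous symmetric polynomial. The corners
with `c < b` provide the monomials in which the variable of weight `t²` has exponent at least 2. -/
def Corners.toMonomial : Corners M → StandardMonomial M
  | ⟨a, b, c, d, hab, hac, hbd, hcd, hdM⟩ =>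
    if hb : b = 0 then ⟨d - c, 0, c, 0, 0, by omega, by omega⟩
    else if ha : a = 0 then
      if hbcd : b + c ≤ d then ⟨d - b - c, M + 1 - d, c, 0, 0, by omega, by omega⟩
      else ⟨b + c - d - 1, M - d, d - b, 1, 0, by omega, by omega⟩
    else if hbc : b < c then ⟨b - a, M - d, c - b - 1, d - c + 2, 0, by omega, by omega⟩
    else if hcb : b = c then ⟨c - a, M - d, 0, d - c, 1, by omega, by omega⟩
    else ⟨c - a, b - c - 1, 0, d - b, M + 2 - d, by omega, by omega⟩

/-- The inverse of `Corners.toMonomial`. -/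
def StandardMonomial.toCorners : StandardMonomial M → Corners M
  | ⟨q, t, qq, qt, tt, _, _⟩ =>
    if htt₀ : tt = 0 then
      if hqt₀ : qt = 0 then
        if ht₀ : t = 0 then
          ⟨0, 0, qq, qq + q, by omega, by omega, by omega, by omega, by omega⟩
        else
          ⟨0, M + 1 - t - qq - q, qq, M + 1 - t, by omega, by omega, by omega, by omega, by omega⟩
      else if hqt₁ : qt = 1 then
        ⟨0, M - t - qq, q + qq + 1, M - t, by omega, by omega, by omega, by omega, by omega⟩
      else
        ⟨M + 1 - t - qt - q - qq, M + 1 - t - qt - qq, M + 2 - t - qt, M - t,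
          by omega, by omega, by omega, by omega, by omega⟩
    else if htt₁ : tt = 1 then
      ⟨M - t - qt - q, M - t - qt, M - t - qt, M - t,
        by omega, by omega, by omega, by omega, by omega⟩
    else
      ⟨M + 1 - tt - qt - t - q, M + 2 - tt - qt, M + 1 - tt - qt - t, M + 2 - tt,
        by omega, by omega, by omega, by omega, by omega⟩

theorem Corners.toCorners_toMonomial (x : Corners M) : x.toMonomial.toCorners = x := by
  obtain ⟨a, b, c, d, hab, hac, hbd, hcd, hdM⟩ := x
  rw [Corners.toMonomial]
  split_ifs <;> rw [StandardMonomial.toCorners] <;> split_ifs <;> ext <;> lia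

theorem StandardMonomial.toMonomial_toCorners (y : StandardMonomial M) :
    y.toCorners.toMonomial = y := by
  obtain ⟨q, t, qq, qt, tt, hM, hst⟩ := y
  rw [StandardMonomial.toCorners]
  split_ifs <;> rw [Corners.toMonomial] <;> split_ifs <;> ext <;> lia

theorem Corners.degQ_toMonomial (x : Corners M) :
    x.toMonomial.degQ = x.c + x.d - (x.a + x.b) := by
  obtain ⟨a, b, c, d, hab, hac, hbd, hcd, hdM⟩ := x
  rw [Corners.toMonomial, StandardMonomial.degQ]
  split_ifs <;> lia

theorem Corners.degT_toMonomial (x : Corners M) : x.toMonomial.degT = x.bounce := by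
  obtain ⟨a, b, c, d, hab, hac, hbd, hcd, hdM⟩ := x
  rw [Corners.toMonomial, StandardMonomial.degT, Corners.bounce]
  dsimp only
  split_ifs <;> lia

/-- Polyominoes with three rows correspond to standard monomials, the pair (area, bounce) to the
bidegree. -/
noncomputable def Polyomino.equivStandardMonomial : Polyomino (M + 1) 3 ≃ StandardMonomial M :=
  (Equiv.ofBijective Polyomino.corners
    ⟨Polyomino.corners_injective, Polyomino.corners_surjective⟩).trans
      ⟨Corners.toMonomial, StandardMonomial.toCorners, Corners.toCorners_toMonomial,
        StandardMonomial.toMonomial_toCorners⟩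

theorem Polyomino.degQ_equivStandardMonomial (P : Polyomino (M + 1) 3) :
    P.equivStandardMonomial.degQ = area P :=
  P.corners.degQ_toMonomial.trans P.area_eq.symm

theorem Polyomino.degT_equivStandardMonomial (P : Polyomino (M + 1) 3) :
    P.equivStandardMonomial.degT = bounce P :=
  P.corners.degT_toMonomial.trans P.bounce_eq.symm

/-- The involution of the polyominoes with three rows exchanging area and bounce. -/
noncomputable def Polyomino.swap : Polyomino (M + 1) 3 ≃ Polyomino (M + 1) 3 :=
  (Polyomino.equivStandardMonomial.trans StandardMonomial.swap_involutive.toPerm).trans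
    Polyomino.equivStandardMonomial.symm

theorem Polyomino.equivStandardMonomial_swap (P : Polyomino (M + 1) 3) :
    P.swap.equivStandardMonomial = P.equivStandardMonomial.swap :=
  Polyomino.equivStandardMonomial.apply_symm_apply _

theorem Polyomino.area_swap (P : Polyomino (M + 1) 3) : area P.swap = bounce P := by
  rw [← degQ_equivStandardMonomial, equivStandardMonomial_swap, StandardMonomial.degQ_swap,
    degT_equivStandardMonomial]

theorem Polyomino.bounce_swap (P : Polyomino (M + 1) 3) : bounce P.swap = area P := by
  rw [← degT_equivStandardMonomial, equivStandardMonomial_swap, StandardMonomial.degT_swap,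
    degQ_equivStandardMonomial]

end StandardMonomials

/-- The `q,t`-symmetry `N_{n,3}(q,t) = N_{n,3}(t,q)` of the `q,t`-Narayana polynomial
defined by (area, bounce) on polyominoes: for all `n ≥ 3` and `u v`, the number of
`P ∈ PP(n-2,3)` with `area P = u` and `bounce P = v` equals the number with
`area P = v` and `bounce P = u`. -/
theorem narayana_qt_symmetry (n u v : ℕ) (hn : 3 ≤ n) :
    Nat.card {P : Polyomino (n - 2) 3 // area P = u ∧ bounce P = v} =
    Nat.card {P : Polyomino (n - 2) 3 // area P = v ∧ bounce P = u} := by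
  obtain ⟨M, rfl⟩ := Nat.exists_eq_add_of_le' hn
  change Nat.card {P : Polyomino (M + 1) 3 // _} = Nat.card {P : Polyomino (M + 1) 3 // _}
  exact Nat.card_congr <| Polyomino.swap.subtypeEquiv fun P => by
    rw [P.area_swap, P.bounce_swap, and_comm]

end QtN
end

section
/- For all m, n ≥ 1, the map ι : PP(m,n) → PP(m,n+1) defined as follows is well defined, injective, and preserves both the area and the bounce statistics: writing a polyomino P ∈ PP(m,n) as a pair of paths with upper path U and lower path E·L (the lower path of any parallelogram polyomino begins with an east step E), ι(P) is the polyomino in PP(m,n+1) with upper path N·U and lower path E·N·L. That is, area(ι(P)) = area(P) and bounce(ι(P)) = bounce(P) for all P ∈ PP(m,n), and ι(P) = ι(P') implies P = P'. -/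
namespace QtN

section PathPts

open scoped Pointwise

theorem pathPos_cons (s : Step) (w : List Step) : pathPos (s :: w) = pathPos [s] + pathPos w := by
  cases s <;> simp [pathPos, countE, countN, add_comm]

theorem pathPts_cons (s : Step) (w : List Step) :
    pathPts (s :: w) = insert 0 (pathPos [s] +ᵥ pathPts w) := by
  have pathPos_take : ∀ i, pathPos ((s :: w).take (i + 1)) = pathPos [s] + pathPos (w.take i) :=
    fun i => by rw [List.take_succ_cons, pathPos_cons]
  ext p
  simp only [pathPts, List.length_cons, List.range_succ_eq_map (n := w.length + 1), List.map_cons,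
    List.map_map, Function.comp_def, Nat.succ_eq_add_one, pathPos_take, List.toFinset_cons,
    Finset.mem_insert, List.mem_toFinset, List.mem_map, Finset.mem_vadd_finset, vadd_eq_add,
    exists_exists_and_eq_and]
  rfl

theorem pathPts_cons_E (w : List Step) :
    pathPts (Step.E :: w) = insert 0 (((1, 0) : ℕ × ℕ) +ᵥ pathPts w) :=
  pathPts_cons Step.E w

theorem pathPts_cons_N (w : List Step) :
    pathPts (Step.N :: w) = insert 0 (((0, 1) : ℕ × ℕ) +ᵥ pathPts w) :=
  pathPts_cons Step.N w

theorem zero_mem_pathPts (w : List Step) : 0 ∈ pathPts w := by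
  cases w with
  | nil => decide
  | cons s w => simp [pathPts_cons]

theorem pathPts_cons_N_inter_cons_E_cons_N (U L : List Step) :
    pathPts (Step.N :: U) ∩ pathPts (Step.E :: Step.N :: L) =
      insert 0 (((0, 1) : ℕ × ℕ) +ᵥ (pathPts U ∩ pathPts (Step.E :: L)).erase 0) := by
  set e : ℕ × ℕ := (1, 0)
  set a : ℕ × ℕ := (0, 1)
  have zero_notMem : 0 ∉ pathPts U ∩ (e +ᵥ pathPts L) := by
    simp [e, Finset.mem_vadd_finset]
  have e_notMem : e + 0 ∉ a +ᵥ pathPts U := by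
    simp [e, a, Finset.mem_vadd_finset]
  have vadd_inter : a +ᵥ pathPts U ∩ (e +ᵥ pathPts L) =
      (a +ᵥ pathPts U) ∩ (a +ᵥ (e +ᵥ pathPts L)) :=
    Finset.image_inter _ _ (add_right_injective a)
  have erase_zero : (pathPts U ∩ pathPts (Step.E :: L)).erase 0 = pathPts U ∩ (e +ᵥ pathPts L) := by
    rw [pathPts_cons_E, Finset.inter_insert_of_mem (zero_mem_pathPts U),
      Finset.erase_insert zero_notMem]
  rw [erase_zero, pathPts_cons_E, pathPts_cons_N, pathPts_cons_N, ← Finset.insert_inter_distrib,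
    Finset.vadd_finset_insert, vadd_eq_add, Finset.inter_insert_of_notMem e_notMem, vadd_comm e a,
    vadd_inter]

end PathPts

theorem colHeightsAux_succ (w : List Step) (h : ℕ) :
    colHeightsAux w (h + 1) = (colHeightsAux w h).map (· + 1) := by
  induction w generalizing h with
  | nil => rfl
  | cons s w ih => cases s <;> simp [colHeightsAux, ih]

theorem length_colHeightsAux (w : List Step) (h : ℕ) :
    (colHeightsAux w h).length = countE w := by
  induction w generalizing h with
  | nil => rfl
  | cons s w ih => cases s <;> simp [colHeightsAux, ih]

theorem colHeight_cons_N {w : List Step} {i : ℕ} (hi : i < countE w) :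
    colHeight (Step.N :: w) i = colHeight w i + 1 := by
  have hi' : i < (colHeightsAux w 0).length := by rwa [length_colHeightsAux]
  simp [colHeight, colHeightsAux, colHeightsAux_succ, hi']

@[simp]
theorem colHeight_cons_E_zero (w : List Step) : colHeight (Step.E :: w) 0 = 0 := by
  simp [colHeight, colHeightsAux]

@[simp]
theorem colHeight_cons_E_succ (w : List Step) (i : ℕ) :
    colHeight (Step.E :: w) (i + 1) = colHeight w i := by
  simp [colHeight, colHeightsAux]

theorem colHeight_cons_E_cons_N {w : List Step} {i : ℕ} (h0 : 0 < i) (hi : i < countE w + 1) :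
    colHeight (Step.E :: Step.N :: w) i = colHeight (Step.E :: w) i + 1 := by
  obtain ⟨i, rfl⟩ := Nat.exists_eq_add_one.2 h0
  rw [colHeight_cons_E_succ, colHeight_cons_E_succ, colHeight_cons_N (Nat.lt_of_succ_lt_succ hi)]

theorem mem_pathPts_of_colHeight_zero_pos {w : List Step} (h : 0 < colHeight w 0) :
    (0, 1) ∈ pathPts w := by
  match w with
  | [] => simp [colHeight, colHeightsAux] at h
  | Step.E :: w => simp at h
  | Step.N :: w =>
    rw [pathPts_cons_N, Finset.mem_insert, Finset.mem_vadd_finset]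
    exact .inr ⟨0, zero_mem_pathPts w, rfl⟩

/-- The abscissa at which the bounce path arrives when, from abscissa `x`, it goes north to the
ceiling (whose height there is that of column `x - 1`) and then east to the floor. This is the
value `x'` in the recursion of `bounceAux`. -/
def bounceCol (hU hL : ℕ → ℕ) (m n x : ℕ) : ℕ :=
  if hU (x - 1) = n then m else eastTarget hL m x (hU (x - 1))

section Bounce

variable {hU hL hU' hL' : ℕ → ℕ} {m n x y : ℕ}

theorem bounceAux_succ_of_ne (f j : ℕ) (h : ¬(x = m ∧ y = n)) :
    bounceAux hU hL m n (f + 1) x y j =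
      (j + 1) * ((hU (x - 1) - y) + (bounceCol hU hL m n x - x)) +
        bounceAux hU hL m n f (bounceCol hU hL m n x) (hU (x - 1)) (j + 1) := by
  rw [bounceAux, if_neg h]
  rfl

theorem eastTarget_mem_Icc (hL : ℕ → ℕ) (y : ℕ) (hx : x ≤ m) :
    eastTarget hL m x y ∈ Set.Icc x m := by
  unfold eastTarget
  rcases h : (List.range m).filter (fun i => decide (x ≤ i ∧ y ≤ hL i)) with _ | ⟨i, l⟩
  · exact ⟨hx, le_rfl⟩
  · have hi : i ∈ (List.range m).filter (fun i => decide (x ≤ i ∧ y ≤ hL i)) :=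
      h ▸ List.mem_cons_self
    simp only [List.mem_filter, List.mem_range, decide_eq_true_eq] at hi
    exact ⟨hi.2.1, hi.1.le⟩

theorem bounceCol_mem_Icc (hU hL : ℕ → ℕ) (n : ℕ) (hx : x ≤ m) :
    bounceCol hU hL m n x ∈ Set.Icc x m := by
  unfold bounceCol
  split_ifs
  · exact ⟨hx, le_rfl⟩
  · exact eastTarget_mem_Icc hL _ hx

theorem bounceAux_eq_zero_of_bounceCol_eq_self (f j : ℕ) (hs : bounceCol hU hL m n x = x) :
    bounceAux hU hL m n f x (hU (x - 1)) j = 0 := by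
  induction f generalizing j with
  | zero => rfl
  | succ f ih =>
    by_cases h : x = m ∧ hU (x - 1) = n
    · rw [bounceAux, if_pos h]
    · simp only [bounceAux_succ_of_ne _ _ h, hs, ih, Nat.sub_self, add_zero, mul_zero]

/-- Every round moves strictly east or is the last one to contribute, so `m - x + 1` rounds
suffice. -/
theorem bounceAux_succ_fuel {f : ℕ} (j : ℕ) (hx : x ≤ m) (hf : m - x < f) :
    bounceAux hU hL m n (f + 1) x y j = bounceAux hU hL m n f x y j := by
  induction f generalizing x y j with
  | zero => exact absurd hf (Nat.not_lt_zero _)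
  | succ f ih =>
    by_cases h : x = m ∧ y = n
    · rw [bounceAux, bounceAux, if_pos h, if_pos h]
    · rw [bounceAux_succ_of_ne _ _ h, bounceAux_succ_of_ne _ _ h]
      congr 1
      obtain ⟨hxx', hx'm⟩ := bounceCol_mem_Icc hU hL n hx
      rcases hxx'.eq_or_lt with hstall | hlt
      · rw [← hstall, bounceAux_eq_zero_of_bounceCol_eq_self _ _ hstall.symm,
          bounceAux_eq_zero_of_bounceCol_eq_self _ _ hstall.symm]
      · exact ih _ hx'm (by omega)

theorem bounceAux_eq_add_of_lt (f j : ℕ) (hy : y < hU (x - 1)) (h : ¬(x = m ∧ y = n))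
    (h' : ¬(x = m ∧ y + 1 = n)) :
    bounceAux hU hL m n (f + 1) x y j =
      bounceAux hU hL m n (f + 1) x (y + 1) j + (j + 1) := by
  have hrun : hU (x - 1) - y = hU (x - 1) - (y + 1) + 1 := by omega
  rw [bounceAux_succ_of_ne _ _ h, bounceAux_succ_of_ne _ _ h', hrun]
  ring

theorem eastTarget_add_one (hx : 0 < x) (hL1 : ∀ i, 0 < i → i < m → hL' i = hL i + 1) (y : ℕ) :
    eastTarget hL' m x (y + 1) = eastTarget hL m x y := by
  have hfilter : (List.range m).filter (fun i => decide (x ≤ i ∧ y + 1 ≤ hL' i)) =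
      (List.range m).filter (fun i => decide (x ≤ i ∧ y ≤ hL i)) :=
    List.filter_congr fun i hi => decide_eq_decide.2 <| and_congr_right fun hxi => by
      rw [hL1 i (hx.trans_le hxi) (List.mem_range.1 hi), Nat.add_le_add_iff_right]
  rw [eastTarget, eastTarget, hfilter]

theorem bounceCol_add_one (hx : x ∈ Set.Icc 1 m) (hU1 : ∀ i < m, hU' i = hU i + 1)
    (hL1 : ∀ i, 0 < i → i < m → hL' i = hL i + 1) :
    bounceCol hU' hL' m (n + 1) x = bounceCol hU hL m n x := by
  simp only [bounceCol, hU1 (x - 1) (Nat.sub_one_lt_of_le hx.1 hx.2), Nat.add_right_cancel_iff,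
    eastTarget_add_one hx.1 hL1]

theorem bounceAux_add_one (f j : ℕ) (hx : x ∈ Set.Icc 1 m) (hU1 : ∀ i < m, hU' i = hU i + 1)
    (hL1 : ∀ i, 0 < i → i < m → hL' i = hL i + 1) :
    bounceAux hU' hL' m (n + 1) f x (y + 1) j = bounceAux hU hL m n f x y j := by
  induction f generalizing x y j with
  | zero => rfl
  | succ f ih =>
    by_cases h : x = m ∧ y = n
    · rw [bounceAux, bounceAux, if_pos h, if_pos ⟨h.1, congrArg (· + 1) h.2⟩]
    · have h' : ¬(x = m ∧ y + 1 = n + 1) := by simpa using h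
      have hx' : bounceCol hU hL m n x ∈ Set.Icc 1 m :=
        Set.Icc_subset_Icc_left hx.1 (bounceCol_mem_Icc hU hL n hx.2)
      rw [bounceAux_succ_of_ne _ _ h, bounceAux_succ_of_ne _ _ h', bounceCol_add_one hx hU1 hL1,
        hU1 (x - 1) (Nat.sub_one_lt_of_le hx.1 hx.2), ih _ hx', Nat.add_sub_add_right]

theorem bounceAux_start_add_one (hm : 0 < m) (hn : 0 < n) (hU1 : ∀ i < m, hU' i = hU i + 1)
    (hL1 : ∀ i, 0 < i → i < m → hL' i = hL i + 1) :
    bounceAux hU' hL' m (n + 1) (m + (n + 1) + 2) 1 0 0 =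
      bounceAux hU hL m n (m + n + 2) 1 0 0 + 1 :=
  calc bounceAux hU' hL' m (n + 1) (m + n + 2 + 1) 1 0 0
    _ = bounceAux hU' hL' m (n + 1) (m + n + 2 + 1) 1 1 0 + 1 :=
        bounceAux_eq_add_of_lt _ 0 (by simp [hU1 0 hm]) (by omega) (by omega)
    _ = bounceAux hU hL m n (m + n + 2 + 1) 1 0 0 + 1 := by
        rw [bounceAux_add_one _ _ ⟨le_rfl, hm⟩ hU1 hL1]
    _ = bounceAux hU hL m n (m + n + 2) 1 0 0 + 1 := by
        rw [bounceAux_succ_fuel 0 hm (by omega)]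

end Bounce

namespace Polyomino

attribute [ext] Polyomino

variable {m n : ℕ}

theorem colHeight_lower_zero (hm : 0 < m) (P : Polyomino m n) : colHeight P.lower 0 = 0 := by
  by_contra hne
  have hlower : 0 < colHeight P.lower 0 := Nat.pos_of_ne_zero hne
  have hmeet : (0, 1) ∈ pathPts P.upper ∩ pathPts P.lower :=
    Finset.mem_inter.2 ⟨mem_pathPts_of_colHeight_zero_pos (hlower.trans_le (P.above 0 hm)),
      mem_pathPts_of_colHeight_zero_pos hlower⟩
  simp [P.meet, hm.ne] at hmeet

theorem cons_E_tail_lower (hm : 0 < m) (P : Polyomino m n) :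
    Step.E :: P.lower.tail = P.lower := by
  have hE : countE P.lower = m := P.lowerE
  have h0 : colHeight P.lower 0 = 0 := P.colHeight_lower_zero hm
  match P.lower, hE, h0 with
  | [], hE, _ => exact absurd hE hm.ne
  | Step.E :: L, _, _ => rfl
  | Step.N :: L, hE, h0 =>
    rw [countE_cons_N] at hE
    rw [colHeight_cons_N (hE ▸ hm)] at h0
    exact absurd h0 (Nat.succ_ne_zero _)

theorem countE_tail_lower (hm : 0 < m) (P : Polyomino m n) : countE P.lower.tail + 1 = m := by
  rw [← countE_cons_E, P.cons_E_tail_lower hm, P.lowerE]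

/-- The map `ι : PP(m,n) → PP(m,n+1)`, which replaces the upper path `U` by `N·U` and the lower
path `E·L` by `E·N·L`; the initial `E` of the lower path is split off with `List.tail`. -/
def iota (hm : 0 < m) (P : Polyomino m n) : Polyomino m (n + 1) where
  lower := Step.E :: Step.N :: P.lower.tail
  upper := Step.N :: P.upper
  lowerE := by rw [countE_cons_E, countE_cons_N, P.countE_tail_lower hm]
  lowerN := by
    rw [countN_cons_E, countN_cons_N, ← countN_cons_E, P.cons_E_tail_lower hm, P.lowerN]
  upperE := by rw [countE_cons_N, P.upperE]
  upperN := by rw [countN_cons_N, P.upperN]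
  above i hi := by
    rcases i.eq_zero_or_pos with rfl | h0
    · simp only [colHeight_cons_E_zero, zero_le]
    · rw [colHeight_cons_E_cons_N h0 ((P.countE_tail_lower hm).symm ▸ hi), P.cons_E_tail_lower hm,
        colHeight_cons_N (P.upperE.symm ▸ hi)]
      exact Nat.succ_le_succ (P.above i hi)
  meet := by
    have hne : (0 : ℕ × ℕ) ∉ ({(m, n)} : Finset (ℕ × ℕ)) := by simp [Prod.ext_iff, hm.ne]
    rw [pathPts_cons_N_inter_cons_E_cons_N, P.cons_E_tail_lower hm, P.meet, ← Prod.zero_eq_mk,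
      Finset.erase_insert hne, Finset.vadd_finset_singleton, vadd_eq_add, Prod.mk_add_mk, zero_add,
      add_comm 1 n]

theorem lower_iota (hm : 0 < m) {P : Polyomino m n} {L : List Step} (h : P.lower = Step.E :: L) :
    (iota hm P).lower = Step.E :: Step.N :: L :=
  congrArg (fun w : List Step => Step.E :: Step.N :: w.tail) h

theorem colHeight_iota_upper (hm : 0 < m) (P : Polyomino m n) {i : ℕ} (hi : i < m) :
    colHeight (iota hm P).upper i = colHeight P.upper i + 1 :=
  colHeight_cons_N (P.upperE.symm ▸ hi)

theorem colHeight_iota_lower (hm : 0 < m) (P : Polyomino m n) {i : ℕ} (h0 : 0 < i) (hi : i < m) :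
    colHeight (iota hm P).lower i = colHeight P.lower i + 1 := by
  rw [iota, colHeight_cons_E_cons_N h0 ((P.countE_tail_lower hm).symm ▸ hi),
    P.cons_E_tail_lower hm]

theorem iota_injective (hm : 0 < m) : Function.Injective (iota hm : Polyomino m n → _) := by
  intro P Q h
  have hupper : Step.N :: P.upper = Step.N :: Q.upper := congrArg upper h
  have hlower : Step.E :: Step.N :: P.lower.tail = Step.E :: Step.N :: Q.lower.tail :=
    congrArg lower h
  ext1
  · have htail : P.lower.tail = Q.lower.tail := (List.cons.inj (List.cons.inj hlower).2).2
    rw [← P.cons_E_tail_lower hm, ← Q.cons_E_tail_lower hm, htail]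
  · exact (List.cons.inj hupper).2

theorem sum_colHeight_sub_iota (hm : 0 < m) (P : Polyomino m n) :
    ∑ i ∈ Finset.range m, (colHeight (iota hm P).upper i - colHeight (iota hm P).lower i) =
      ∑ i ∈ Finset.range m, (colHeight P.upper i - colHeight P.lower i) + 1 := by
  obtain ⟨k, rfl⟩ := Nat.exists_eq_add_one.2 hm
  have hright : ∀ i ∈ Finset.range k,
      colHeight (iota hm P).upper (i + 1) - colHeight (iota hm P).lower (i + 1) =
        colHeight P.upper (i + 1) - colHeight P.lower (i + 1) := fun i hi => by
    have hi' : i + 1 < k + 1 := Nat.succ_lt_succ (Finset.mem_range.1 hi)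
    rw [P.colHeight_iota_upper hm hi', P.colHeight_iota_lower hm i.succ_pos hi',
      Nat.add_sub_add_right]
  rw [Finset.sum_range_succ', Finset.sum_range_succ', Finset.sum_congr rfl hright,
    (iota hm P).colHeight_lower_zero hm, P.colHeight_lower_zero hm, P.colHeight_iota_upper hm hm,
    Nat.sub_zero, Nat.sub_zero, add_assoc]

theorem area_iota (hm : 0 < m) (P : Polyomino m n) : area (iota hm P) = area P := by
  rw [area, area, P.sum_colHeight_sub_iota hm]
  omega

theorem bounce_iota (hm : 0 < m) (hn : 0 < n) (P : Polyomino m n) :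
    bounce (iota hm P) = bounce P := by
  rw [bounce, bounce, bounceAux_start_add_one hm hn (fun _ => P.colHeight_iota_upper hm)
    (fun _ => P.colHeight_iota_lower hm)]
  omega

end Polyomino

/-- For all `m, n ≥ 1`, the map `ι : PP(m,n) → PP(m,n+1)` sending a polyomino with
upper path `U` and lower path `E·L` to the polyomino with upper path `N·U` and lower
path `E·N·L` is well defined, injective, and preserves both area and bounce. -/
theorem exists_embedding_preserving_area_bounce (m n : ℕ) (hm : 1 ≤ m) (hn : 1 ≤ n) :
    ∃ ι : Polyomino m n → Polyomino m (n + 1),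
      (∀ P : Polyomino m n, (ι P).upper = Step.N :: P.upper) ∧
      (∀ (P : Polyomino m n) (L : List Step), P.lower = Step.E :: L →
        (ι P).lower = Step.E :: Step.N :: L) ∧
      Function.Injective ι ∧
      (∀ P : Polyomino m n, area (ι P) = area P ∧ bounce (ι P) = bounce P) :=
  ⟨Polyomino.iota hm, fun _ => rfl, fun _ _ => Polyomino.lower_iota hm,
    Polyomino.iota_injective hm, fun P => ⟨P.area_iota hm, P.bounce_iota hm hn⟩⟩

end QtN
end
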